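/- Let 1 ≤ q < p ≤ ∞ with p ≠ 2q, and let α, β ∈ J_p. Then there exist constants c₁, c₂ > 0, depending only on q, p, α, β, such that for all 0 < δ < 1/4: (i) if p < 2q, then c₁·δ^{2/q − 2/p} ≤ sup_{f ∈ B_p^{α,β} ∩ M¹} ω_φ¹(f, δ)_{w_{α,β}, q} ≤ c₂·δ^{2/q − 2/p}; (ii) if p > 2q, then c₁·δ^{1/q} ≤ sup_{f ∈ B_p^{α,β} ∩ M¹} ω_φ¹(f, δ)_{w_{α,β}, q} ≤ c₂·δ^{1/q}. -/

import Mathlib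

open MeasureTheory Set Filter
open scoped ENNReal

noncomputable section

/-- The Jacobi weight `w_{α,β}(x) = (1+x)^α (1-x)^β`. -/
def jacobi (α β : ℝ) (x : ℝ) : ℝ := (1 + x) ^ α * (1 - x) ^ β

/-- `φ(x) = √(1-x²)`. -/
def phiW (x : ℝ) : ℝ := Real.sqrt (1 - x ^ 2)

/-- The `L^p` norm of `g` on the interval `[a,b]` (essential sup when `p = ∞`). -/
def LpOn (g : ℝ → ℝ) (p : ℝ≥0∞) (a b : ℝ) : ℝ≥0∞ :=
  eLpNorm g p (volume.restrict (Icc a b))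

/-- The `k`-th symmetric difference `Δ_h^k(f,x)` relative to `[-1,1]`. -/
def symmDelta (k : ℕ) (h : ℝ) (f : ℝ → ℝ) (x : ℝ) : ℝ :=
  if (x - k * h / 2 ∈ Icc (-1 : ℝ) 1 ∧ x + k * h / 2 ∈ Icc (-1 : ℝ) 1) then
    ∑ i ∈ Finset.range (k + 1), ((k.choose i : ℝ) * (-1 : ℝ) ^ (k - i) * f (x - k * h / 2 + i * h))
  else 0

/-- Main-part weighted modulus `Ω_φ^k(f,δ)_{w,p}`. -/
def OmegaMain (k : ℕ) (f : ℝ → ℝ) (δ : ℝ) (wt : ℝ → ℝ) (p : ℝ≥0∞) : ℝ≥0∞ :=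
  ⨆ h ∈ Ioc (0 : ℝ) δ,
    LpOn (fun x => wt x * symmDelta k (h * phiW x) f x) p
      (-1 + 2 * (k : ℝ) ^ 2 * h ^ 2) (1 - 2 * (k : ℝ) ^ 2 * h ^ 2)

/-- Forward part `Ω→_φ^k(f,δ)_{w,p}`. -/
def OmegaFwd (k : ℕ) (f : ℝ → ℝ) (δ : ℝ) (wt : ℝ → ℝ) (p : ℝ≥0∞) : ℝ≥0∞ :=
  ⨆ h ∈ Ioc (0 : ℝ) (2 * (k : ℝ) ^ 2 * δ ^ 2),
    LpOn (fun x => wt x * symmDelta k h f (x + k * h / 2)) p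
      (-1) (-1 + 2 * (k : ℝ) ^ 2 * δ ^ 2)

/-- Backward part `Ω←_φ^k(f,δ)_{w,p}`. -/
def OmegaBwd (k : ℕ) (f : ℝ → ℝ) (δ : ℝ) (wt : ℝ → ℝ) (p : ℝ≥0∞) : ℝ≥0∞ :=
  ⨆ h ∈ Ioc (0 : ℝ) (2 * (k : ℝ) ^ 2 * δ ^ 2),
    LpOn (fun x => wt x * symmDelta k h f (x - k * h / 2)) p
      (1 - 2 * (k : ℝ) ^ 2 * δ ^ 2) 1

/-- Weighted Ditzian–Totik modulus `ω_φ^k(f,δ)_{w,p}`. -/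
def omegaDT (k : ℕ) (f : ℝ → ℝ) (δ : ℝ) (wt : ℝ → ℝ) (p : ℝ≥0∞) : ℝ≥0∞ :=
  OmegaMain k f δ wt p + OmegaFwd k f δ wt p + OmegaBwd k f δ wt p

/-- `f` is `k`-monotone on `(-1,1)`: all `k`-th divided differences over `k+1` distinct
points of `(-1,1)` are nonnegative. -/
def kMonotoneOn (k : ℕ) (f : ℝ → ℝ) : Prop :=
  ∀ x : Fin (k + 1) → ℝ, Function.Injective x → (∀ i, x i ∈ Ioo (-1 : ℝ) 1) →
    0 ≤ ∑ i, f (x i) / ∏ j ∈ Finset.univ.erase i, (x i - x j)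

/-- `M^k`, the class of `k`-monotone functions on `(-1,1)`. -/
def MSet (k : ℕ) : Set (ℝ → ℝ) := {f | kMonotoneOn k f}

/-- `M_+^k`, the `k`-monotone functions on `(-1,1)` vanishing on `(-1,0]`. -/
def MPlus (k : ℕ) : Set (ℝ → ℝ) :=
  {f | kMonotoneOn k f ∧ ∀ x : ℝ, -1 < x → x ≤ 0 → f x = 0}

/-- `J_p = (-1/p, ∞)` for finite `p`, `[0,∞)` for `p = ∞`. -/
def Jset (p : ℝ≥0∞) : Set ℝ := if p = ∞ then Ici 0 else Ioi (-1 / p.toReal)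

/-- `W_p^{α,β}`. -/
def WSet (p : ℝ≥0∞) (α β : ℝ) : Set (ℝ → ℝ) :=
  {f | Measurable f ∧ LpOn (fun x => jacobi α β x * f x) p (-1) 1 ≠ ⊤}

/-- `B_p^{α,β}`, the unit sphere of `W_p^{α,β}`. -/
def BSet (p : ℝ≥0∞) (α β : ℝ) : Set (ℝ → ℝ) :=
  {f | Measurable f ∧ LpOn (fun x => jacobi α β x * f x) p (-1) 1 = 1}

/-- Best weighted approximation `E_n(f)_{w,q}` by polynomials of degree at most `n`. -/
def En (n : ℕ) (f : ℝ → ℝ) (wt : ℝ → ℝ) (q : ℝ≥0∞) : ℝ≥0∞ :=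
  ⨅ P ∈ {P : Polynomial ℝ | P.natDegree ≤ n},
    LpOn (fun x => wt x * (f x - P.eval x)) q (-1) 1

/-- `E(X, P_n)_{w,q}`. -/
def EClass (X : Set (ℝ → ℝ)) (n : ℕ) (wt : ℝ → ℝ) (q : ℝ≥0∞) : ℝ≥0∞ :=
  ⨆ f ∈ X, En n f wt q

/-!
Reflection reduces the upper bound to a neighbourhood of the left endpoint. A monotone `f` with
`‖w f‖_p ≤ 1` satisfies `|f x| ≤ K (1+x)^(-α-1/p)`, because `|f|` stays above `|f x|` on an interval
of length comparable to `1+x` on one side of `x`. On a block where `1+x` is comparable to `A`, the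
step `hφ` is comparable to `h√A`, and the integral of the difference of a monotone function
telescopes to at most four times the step times its supremum; hence the `q`-th power of the block
norm is at most a constant times `h A^(1/2-q/p)`. Summing over the dyadic `A` between `2h²` and `1`
gives a geometric series, dominated by its first or its last term as `p < 2q` or `p > 2q`; there is
no logarithm because `p ≠ 2q`. Either way the result is `h^min(1/q, 2/q-2/p)`. The forward part is
estimated pointwise, `(1+x)^(-1/p)` being `q`-integrable near `-1`.

For the lower bounds, a step function jumping at `0` gives `δ^(1/q)` through the main part, and a
normalized step function jumping at `-1+δ²` gives `δ^(2/q-2/p)` through the forward part.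
-/

section Powers

variable {A D B L Q u : ℝ}

lemma rpow_le_mul_rpow_of_comparable (r : ℝ) (hL : 0 < L) (hA : 0 < A) (hlo : A / L ≤ u)
    (hhi : u ≤ L * A) : u ^ r ≤ L ^ |r| * A ^ r := by
  have hu : 0 < u := (div_pos hA hL).trans_le hlo
  rcases le_total 0 r with hr | hr
  · rw [abs_of_nonneg hr, ← Real.mul_rpow hL.le hA.le]
    exact Real.rpow_le_rpow hu.le hhi hr
  · rw [abs_of_nonpos hr, Real.rpow_neg hL.le, ← Real.inv_rpow hL.le,
      ← Real.mul_rpow (inv_nonneg.2 hL.le) hA.le, inv_mul_eq_div]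
    exact Real.rpow_le_rpow_of_nonpos (div_pos hA hL) hlo hr

lemma mul_rpow_le_rpow_of_comparable (r : ℝ) (hL : 0 < L) (hA : 0 < A) (hlo : A / L ≤ u)
    (hhi : u ≤ L * A) : L ^ (-|r|) * A ^ r ≤ u ^ r := by
  have hu : 0 < u := (div_pos hA hL).trans_le hlo
  rw [Real.rpow_neg hL.le, inv_mul_le_iff₀ (Real.rpow_pos_of_pos hL _)]
  exact rpow_le_mul_rpow_of_comparable r hL hu ((div_le_iff₀' hL).2 hhi) ((div_le_iff₀' hL).1 hlo)

lemma rpow_le_rpow_sub_one_mul (hD : 0 ≤ D) (hDB : D ≤ B) (hQ : 1 ≤ Q) :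
    D ^ Q ≤ B ^ (Q - 1) * D := by
  rcases hD.eq_or_lt with rfl | hpos
  · simp [Real.zero_rpow (show Q ≠ 0 by linarith)]
  · calc D ^ Q = D ^ (Q - 1) * D := by rw [← Real.rpow_add_one hpos.ne', sub_add_cancel]
      _ ≤ B ^ (Q - 1) * D := by gcongr

lemma one_div_toReal_lt_one_div_toReal {q p : ℝ≥0∞} (hq : q ≠ 0) (hqp : q < p) :
    1 / p.toReal < 1 / q.toReal := by
  simp only [one_div, ← ENNReal.toReal_inv]
  exact ENNReal.toReal_strict_mono (ENNReal.inv_ne_top.2 hq) (ENNReal.inv_lt_inv.2 hqp)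

end Powers

section DyadicSummation

lemma setLIntegral_le_of_geometric_cover {X : Type*} [MeasurableSpace X] {μ : Measure X}
    {F : X → ℝ≥0∞} {S : Set X} {block : ℕ → Set X} {T ρ : ℝ} (hS : S ⊆ ⋃ j, block j)
    (hT : 0 ≤ T) (hρ0 : 0 ≤ ρ) (hρ1 : ρ < 1)
    (hblock : ∀ j, ∫⁻ x in block j, F x ∂μ ≤ ENNReal.ofReal (T * ρ ^ j)) :
    ∫⁻ x in S, F x ∂μ ≤ ENNReal.ofReal (T * (1 - ρ)⁻¹) := by
  calc ∫⁻ x in S, F x ∂μ ≤ ∫⁻ x in ⋃ j, block j, F x ∂μ := lintegral_mono_set hS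
    _ ≤ ∑' j, ∫⁻ x in block j, F x ∂μ := lintegral_iUnion_le _ _
    _ ≤ ∑' j, ENNReal.ofReal (T * ρ ^ j) := ENNReal.tsum_le_tsum hblock
    _ = ENNReal.ofReal (∑' j, T * ρ ^ j) :=
      (ENNReal.ofReal_tsum_of_nonneg (fun j => by positivity)
        ((summable_geometric_of_lt_one hρ0 hρ1).mul_left T)).symm
    _ = ENNReal.ofReal (T * (1 - ρ)⁻¹) := by
      rw [tsum_mul_left, tsum_geometric_of_lt_one hρ0 hρ1]

lemma Icc_subset_iUnion_doubling {c lo hi : ℝ} (hlo : 0 < lo) :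
    Icc (c + lo) (c + hi) ⊆ ⋃ j : ℕ, Icc (c + lo * 2 ^ j) (c + min (lo * 2 ^ (j + 1)) hi) := by
  rintro x ⟨hx_lo, hx_hi⟩
  obtain ⟨n, hn_le, hn_lt⟩ := exists_nat_pow_near (x := (x - c) / lo) (y := (2 : ℝ))
    (by rw [one_le_div hlo]; linarith) one_lt_two
  rw [le_div_iff₀' hlo] at hn_le
  rw [div_lt_iff₀' hlo] at hn_lt
  refine mem_iUnion.2 ⟨n, by linarith, ?_⟩
  rw [← sub_le_iff_le_add']
  exact le_min hn_lt.le (by linarith)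

lemma Icc_subset_iUnion_halving {c lo hi : ℝ} (hlo : 0 < lo) (hlohi : lo ≤ hi) :
    Icc (c + lo) (c + hi) ⊆
      ⋃ j : ℕ, Icc (c + max (hi * (1 / 2) ^ (j + 1)) lo) (c + hi * (1 / 2) ^ j) := by
  rintro x ⟨hx_lo, hx_hi⟩
  have hhi : 0 < hi := hlo.trans_le hlohi
  obtain ⟨n, hn_lt, hn_le⟩ := exists_nat_pow_near_of_lt_one (x := (x - c) / hi) (y := (1 / 2 : ℝ))
    (div_pos (by linarith) hhi) (by rw [div_le_one hhi]; linarith) (by norm_num) (by norm_num)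
  rw [lt_div_iff₀' hhi] at hn_lt
  rw [div_le_iff₀' hhi] at hn_le
  refine mem_iUnion.2 ⟨n, ?_, by linarith⟩
  rw [← le_sub_iff_add_le']
  exact max_le hn_lt.le (by linarith)

variable {μ : Measure ℝ} {F : ℝ → ℝ≥0∞} {c lo hi T e : ℝ}

lemma setLIntegral_Icc_le_of_doubling_of_neg (he : e < 0) (hlo : 0 < lo) (hT : 0 ≤ T)
    (hF : ∀ a b, lo ≤ a → a ≤ b → b ≤ hi → b ≤ 2 * a →
      ∫⁻ x in Icc (c + a) (c + b), F x ∂μ ≤ ENNReal.ofReal (T * a ^ e)) :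
    ∫⁻ x in Icc (c + lo) (c + hi), F x ∂μ ≤ ENNReal.ofReal (T * lo ^ e * (1 - 2 ^ e)⁻¹) := by
  refine setLIntegral_le_of_geometric_cover (Icc_subset_iUnion_doubling hlo) (by positivity)
    (by positivity) (Real.rpow_lt_one_of_one_lt_of_neg one_lt_two he) fun j => ?_
  rcases le_or_gt (lo * 2 ^ j) (min (lo * 2 ^ (j + 1)) hi) with hle | hgt
  · have hgeom : (lo * 2 ^ j) ^ e = lo ^ e * (2 ^ e) ^ j := by
      rw [Real.mul_rpow hlo.le (by positivity), Real.rpow_pow_comm zero_le_two]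
    rw [mul_assoc, ← hgeom]
    refine hF _ _ (le_mul_of_one_le_right hlo.le (one_le_pow₀ one_le_two)) hle (min_le_right _ _)
      ((min_le_left _ _).trans_eq ?_)
    ring
  · rw [Icc_eq_empty (by linarith)]
    simp

lemma setLIntegral_Icc_le_of_doubling_of_pos (he : 0 < e) (hlo : 0 < lo) (hlohi : lo ≤ hi)
    (hT : 0 ≤ T)
    (hF : ∀ a b, lo ≤ a → a ≤ b → b ≤ hi → b ≤ 2 * a →
      ∫⁻ x in Icc (c + a) (c + b), F x ∂μ ≤ ENNReal.ofReal (T * a ^ e)) :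
    ∫⁻ x in Icc (c + lo) (c + hi), F x ∂μ ≤ ENNReal.ofReal (T * hi ^ e * (1 - 2 ^ (-e))⁻¹) := by
  have hhi : 0 < hi := hlo.trans_le hlohi
  refine setLIntegral_le_of_geometric_cover (Icc_subset_iUnion_halving hlo hlohi) (by positivity)
    (by positivity) (Real.rpow_lt_one_of_one_lt_of_neg one_lt_two (neg_neg_of_pos he)) fun j => ?_
  rcases le_or_gt (max (hi * (1 / 2) ^ (j + 1)) lo) (hi * (1 / 2) ^ j) with hle | hgt
  · have hgeom : hi ^ e * (2 ^ (-e)) ^ j = (hi * (1 / 2) ^ j) ^ e := by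
      rw [Real.mul_rpow hhi.le (by positivity), ← Real.rpow_pow_comm (by norm_num), one_div,
        Real.inv_rpow zero_le_two, Real.rpow_neg zero_le_two]
    refine (hF _ _ (le_max_right _ _) hle ?_ ?_).trans (ENNReal.ofReal_le_ofReal ?_)
    · exact mul_le_of_le_one_right hhi.le (pow_le_one₀ (by norm_num) (by norm_num))
    · have hmax := le_max_left (hi * (1 / 2) ^ (j + 1)) lo
      rw [pow_succ] at hmax ⊢
      linarith
    · rw [mul_assoc, hgeom]
      gcongr
  · rw [Icc_eq_empty (by linarith)]
    simp

lemma setLIntegral_Icc_le_of_doubling (he : e ≠ 0) (hlo : 0 < lo) (hlohi : lo ≤ hi) (hT : 0 ≤ T)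
    (hF : ∀ a b, lo ≤ a → a ≤ b → b ≤ hi → b ≤ 2 * a →
      ∫⁻ x in Icc (c + a) (c + b), F x ∂μ ≤ ENNReal.ofReal (T * a ^ e)) :
    ∫⁻ x in Icc (c + lo) (c + hi), F x ∂μ ≤
      ENNReal.ofReal (T * max (lo ^ e) (hi ^ e) * (1 - 2 ^ (-|e|))⁻¹) := by
  have hratio : (2 : ℝ) ^ (-|e|) < 1 :=
    Real.rpow_lt_one_of_one_lt_of_neg one_lt_two (neg_neg_of_pos (abs_pos.2 he))
  have hfactor : 0 ≤ (1 - (2 : ℝ) ^ (-|e|))⁻¹ := inv_nonneg.2 (by linarith)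
  rcases he.lt_or_gt with hneg | hpos
  · refine (setLIntegral_Icc_le_of_doubling_of_neg hneg hlo hT hF).trans
      (ENNReal.ofReal_le_ofReal ?_)
    rw [abs_of_neg hneg, neg_neg] at hfactor ⊢
    gcongr
    exact le_max_left _ _
  · refine (setLIntegral_Icc_le_of_doubling_of_pos hpos hlo hlohi hT hF).trans
      (ENNReal.ofReal_le_ofReal ?_)
    rw [abs_of_pos hpos] at hfactor ⊢
    gcongr
    exact le_max_right _ _

end DyadicSummation

section LpOnBounds

variable {g : ℝ → ℝ} {p : ℝ≥0∞} {a b r : ℝ}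

lemma ofReal_mul_rpow_le_lpOn {A B m : ℝ} (hp : p ≠ 0) (hab : a < b)
    (hsub : Icc a b ⊆ Icc A B) (hm : 0 ≤ m) (hg : ∀ x ∈ Icc a b, m ≤ |g x|) :
    ENNReal.ofReal (m * (b - a) ^ (1 / p.toReal)) ≤ LpOn g p A B := by
  have hvol : volume.restrict (Icc a b) univ = ENNReal.ofReal (b - a) := by simp
  have hne : volume.restrict (Icc a b) ≠ 0 := by
    rw [Ne, ← Measure.measure_univ_eq_zero, hvol, ENNReal.ofReal_eq_zero, not_le]
    exact sub_pos.2 hab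
  calc ENNReal.ofReal (m * (b - a) ^ (1 / p.toReal))
      = eLpNorm (fun _ : ℝ => m) p (volume.restrict (Icc a b)) := by
        rw [eLpNorm_const _ hp hne, hvol, ENNReal.ofReal_mul hm, Real.enorm_eq_ofReal hm,
          ENNReal.ofReal_rpow_of_pos (sub_pos.2 hab)]
    _ ≤ eLpNorm g p (volume.restrict (Icc a b)) := by
        refine eLpNorm_mono_ae ?_
        filter_upwards [ae_restrict_mem measurableSet_Icc] with x hx
        simpa only [Real.norm_eq_abs, abs_of_nonneg hm] using hg x hx
    _ ≤ LpOn g p A B := eLpNorm_mono_measure _ (Measure.restrict_mono hsub le_rfl)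

lemma lpOn_le_of_setLIntegral_le {B : ℝ} (hp : p ≠ 0) (hp' : p ≠ ∞) (hB : 0 ≤ B)
    (hg : ∫⁻ x in Icc a b, ‖g x‖ₑ ^ p.toReal ≤ ENNReal.ofReal B) :
    LpOn g p a b ≤ ENNReal.ofReal (B ^ (1 / p.toReal)) := by
  rw [LpOn, eLpNorm_eq_lintegral_rpow_enorm_toReal hp hp',
    ← ENNReal.ofReal_rpow_of_nonneg hB (by positivity)]
  exact ENNReal.rpow_le_rpow hg (by positivity)

lemma lpOn_le_lpOn_add_lpOn (hp : 1 ≤ p) (hp' : p ≠ ∞) (g : ℝ → ℝ) (a b c : ℝ) :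
    LpOn g p a c ≤ LpOn g p a b + LpOn g p b c := by
  have hp0 : p ≠ 0 := (one_pos.trans_le hp).ne'
  have hp1 : 1 ≤ p.toReal := by simpa using ENNReal.toReal_mono hp' hp
  simp only [LpOn, eLpNorm_eq_lintegral_rpow_enorm_toReal hp0 hp']
  refine le_trans ?_ (ENNReal.rpow_add_le_add_rpow _ _ (by positivity)
    ((div_le_one (by positivity)).2 hp1))
  gcongr
  exact (lintegral_mono_set Icc_subset_Icc_union_Icc).trans (lintegral_union_le _ _ _)

lemma lpOn_comp_neg (g : ℝ → ℝ) (p : ℝ≥0∞) (a b : ℝ) :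
    LpOn (fun x => g (-x)) p (-b) (-a) = LpOn g p a b := by
  have hpres := (Measure.measurePreserving_neg (volume : Measure ℝ)).restrict_preimage_emb
    (MeasurableEquiv.neg ℝ).measurableEmbedding (Icc a b)
  rw [neg_preimage, neg_Icc] at hpres
  have hmap : (volume.restrict (Icc (-b) (-a))).map (MeasurableEquiv.neg ℝ) =
      volume.restrict (Icc a b) := hpres.map_eq
  rw [LpOn, LpOn, ← hmap]
  exact (MeasurableEquiv.neg ℝ).measurableEmbedding.eLpNorm_map_measure.symm

lemma lpOn_const_mul (c : ℝ) (g : ℝ → ℝ) (p : ℝ≥0∞) (a b : ℝ) :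
    LpOn (fun x => c * g x) p a b = ‖c‖ₑ * LpOn g p a b :=
  eLpNorm_const_smul c g p _

lemma lpOn_congr_abs {g₁ g₂ : ℝ → ℝ} (h : ∀ x, |g₁ x| = |g₂ x|) (p : ℝ≥0∞) (a b : ℝ) :
    LpOn g₁ p a b = LpOn g₂ p a b :=
  eLpNorm_congr_norm_ae (Eventually.of_forall h)

lemma setLIntegral_one_add_rpow {u : ℝ} (hr : -1 < r) (hu : 0 < u) :
    ∫⁻ x in Icc (-1 : ℝ) (-1 + u), ENNReal.ofReal ((1 + x) ^ r) =
      ENNReal.ofReal (u ^ (r + 1) / (r + 1)) := by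
  have hle : (-1 : ℝ) ≤ -1 + u := by linarith
  have hint : IntervalIntegrable (fun x : ℝ => (1 + x) ^ r) volume (-1) (-1 + u) := by
    simpa [sub_eq_neg_add] using
      (intervalIntegral.intervalIntegrable_rpow' (a := 0) (b := u) hr).comp_add_left 1
  rw [← ofReal_integral_eq_lintegral_ofReal]
  · rw [integral_Icc_eq_integral_Ioc, ← intervalIntegral.integral_of_le hle,
      intervalIntegral.integral_comp_add_left (fun x => x ^ r) 1, add_neg_cancel,
      add_neg_cancel_left, integral_rpow (Or.inl hr), Real.zero_rpow (by linarith), sub_zero]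
  · exact (intervalIntegrable_iff_integrableOn_Icc_of_le hle).1 hint
  · filter_upwards [ae_restrict_mem measurableSet_Icc] with x hx
    exact Real.rpow_nonneg (by linarith [hx.1]) _

lemma lpOn_one_add_rpow_le (hp : p ≠ 0) (hr : r ∈ Jset p) :
    ∃ C > 0, ∀ u, 0 < u → LpOn (fun x => (1 + x) ^ r) p (-1) (-1 + u) ≤
      ENNReal.ofReal (C * u ^ (r + 1 / p.toReal)) := by
  by_cases hp' : p = ∞
  · subst hp'
    have hr0 : 0 ≤ r := by simpa [Jset] using hr
    refine ⟨1, one_pos, fun u _ => ?_⟩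
    rw [LpOn, eLpNorm_exponent_top]
    refine eLpNormEssSup_le_of_ae_bound ?_
    filter_upwards [ae_restrict_mem measurableSet_Icc] with x hx
    have hx0 : 0 ≤ 1 + x := by linarith [hx.1]
    rw [Real.norm_of_nonneg (by positivity), ENNReal.toReal_top, div_zero, add_zero, one_mul]
    exact Real.rpow_le_rpow hx0 (by linarith [hx.2]) hr0
  · have hP : 0 < p.toReal := ENNReal.toReal_pos hp hp'
    have hrP : -1 < r * p.toReal := by simpa [Jset, hp', div_lt_iff₀ hP] using hr
    have hrP' : 0 < r * p.toReal + 1 := by linarith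
    refine ⟨((r * p.toReal + 1)⁻¹) ^ (1 / p.toReal), by positivity, fun u hu => ?_⟩
    have hpow : ∀ x ∈ Icc (-1) (-1 + u),
        ‖(1 + x) ^ r‖ₑ ^ p.toReal = ENNReal.ofReal ((1 + x) ^ (r * p.toReal)) := fun x hx => by
      have hx0 : 0 ≤ 1 + x := by linarith [hx.1]
      rw [Real.enorm_of_nonneg (by positivity), ENNReal.ofReal_rpow_of_nonneg (by positivity) hP.le,
        Real.rpow_mul hx0]
    refine (lpOn_le_of_setLIntegral_le hp hp' (by positivity)
      ((setLIntegral_congr_fun measurableSet_Icc hpow).trans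
        (setLIntegral_one_add_rpow hrP hu)).le).trans_eq (congrArg ENNReal.ofReal ?_)
    rw [div_eq_inv_mul, Real.mul_rpow (by positivity) (by positivity), ← Real.rpow_mul hu.le]
    congr 2
    field_simp

lemma lpOn_le_of_abs_le_one_add_rpow (hp : p ≠ 0) (hr : r ∈ Jset p) :
    ∃ C > 0, ∀ g : ℝ → ℝ, ∀ c u, 0 ≤ c → 0 < u →
      (∀ x ∈ Ioc (-1) (-1 + u), |g x| ≤ c * (1 + x) ^ r) →
      LpOn g p (-1) (-1 + u) ≤ ENNReal.ofReal (C * c * u ^ (r + 1 / p.toReal)) := by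
  obtain ⟨C, hC, hpow⟩ := lpOn_one_add_rpow_le hp hr
  refine ⟨C, hC, fun g c u hc hu hg => ?_⟩
  calc LpOn g p (-1) (-1 + u) ≤ LpOn (fun x => c * (1 + x) ^ r) p (-1) (-1 + u) := by
        refine eLpNorm_mono_ae ?_
        rw [← restrict_Ioc_eq_restrict_Icc]
        filter_upwards [ae_restrict_mem measurableSet_Ioc] with x hx
        exact (hg x hx).trans (le_abs_self _)
    _ = ENNReal.ofReal c * LpOn (fun x => (1 + x) ^ r) p (-1) (-1 + u) := by
        rw [lpOn_const_mul, Real.enorm_of_nonneg hc]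
    _ ≤ ENNReal.ofReal c * ENNReal.ofReal (C * u ^ (r + 1 / p.toReal)) := by
        gcongr
        exact hpow u hu
    _ = ENNReal.ofReal (C * c * u ^ (r + 1 / p.toReal)) := by
        rw [← ENNReal.ofReal_mul hc, mul_left_comm, mul_assoc]

end LpOnBounds

section JacobiWeight

variable {α β A x : ℝ}

lemma jacobi_nonneg (hx : x ∈ Icc (-1) 1) : 0 ≤ jacobi α β x :=
  mul_nonneg (Real.rpow_nonneg (by linarith [hx.1]) _) (Real.rpow_nonneg (by linarith [hx.2]) _)

lemma jacobi_neg (α β x : ℝ) : jacobi α β (-x) = jacobi β α x := by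
  rw [jacobi, jacobi, mul_comm, sub_neg_eq_add, ← sub_eq_add_neg]

lemma jacobi_le_mul_one_add_rpow (hx : -1 ≤ x) (hx' : x ≤ 3 / 4) :
    jacobi α β x ≤ 4 ^ |β| * (1 + x) ^ α := by
  have hright : (1 - x) ^ β ≤ 4 ^ |β| * 1 ^ β :=
    rpow_le_mul_rpow_of_comparable β four_pos one_pos (by linarith) (by linarith)
  rw [Real.one_rpow, mul_one] at hright
  rw [jacobi, mul_comm]
  exact mul_le_mul_of_nonneg_right hright (Real.rpow_nonneg (by linarith) _)

lemma mul_one_add_rpow_le_jacobi (hx : -1 ≤ x) (hx' : x ≤ 3 / 4) :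
    4 ^ (-|β|) * (1 + x) ^ α ≤ jacobi α β x := by
  have hright : 4 ^ (-|β|) * 1 ^ β ≤ (1 - x) ^ β :=
    mul_rpow_le_rpow_of_comparable β four_pos one_pos (by linarith) (by linarith)
  rw [Real.one_rpow, mul_one] at hright
  rw [jacobi, mul_comm ((1 + x) ^ α)]
  exact mul_le_mul_of_nonneg_right hright (Real.rpow_nonneg (by linarith) _)

lemma jacobi_le_of_comparable (hA : 0 < A) (hlo : A / 4 ≤ 1 + x) (hhi : 1 + x ≤ 4 * A)
    (hx : x ≤ 3 / 4) : jacobi α β x ≤ 4 ^ (|α| + |β|) * A ^ α := by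
  calc jacobi α β x ≤ 4 ^ |β| * (1 + x) ^ α := jacobi_le_mul_one_add_rpow (by linarith) hx
    _ ≤ 4 ^ |β| * (4 ^ |α| * A ^ α) := by
        gcongr
        exact rpow_le_mul_rpow_of_comparable α four_pos hA hlo hhi
    _ = 4 ^ (|α| + |β|) * A ^ α := by rw [Real.rpow_add four_pos]; ring

lemma le_jacobi_of_comparable (hA : 0 < A) (hlo : A / 4 ≤ 1 + x) (hhi : 1 + x ≤ 4 * A)
    (hx : x ≤ 3 / 4) : 4 ^ (-(|α| + |β|)) * A ^ α ≤ jacobi α β x := by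
  calc 4 ^ (-(|α| + |β|)) * A ^ α = 4 ^ (-|β|) * (4 ^ (-|α|) * A ^ α) := by
        rw [neg_add, Real.rpow_add four_pos]; ring
    _ ≤ 4 ^ (-|β|) * (1 + x) ^ α := by
        gcongr
        exact mul_rpow_le_rpow_of_comparable α four_pos hA hlo hhi
    _ ≤ jacobi α β x := mul_one_add_rpow_le_jacobi (by linarith) hx

lemma add_one_div_toReal_nonneg_of_mem_jset {p : ℝ≥0∞} (hα : α ∈ Jset p) :
    0 ≤ α + 1 / p.toReal := by
  unfold Jset at hα
  split_ifs at hα with hp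
  · simpa [hp] using hα
  · have hlt : -1 / p.toReal < α := hα
    rw [neg_div] at hlt
    linarith

end JacobiWeight

section Homogeneity

variable (k : ℕ) (c δ : ℝ) (f wt : ℝ → ℝ) (p : ℝ≥0∞)

lemma symmDelta_const_smul (h x : ℝ) : symmDelta k h (c • f) x = c * symmDelta k h f x := by
  simp only [symmDelta, Pi.smul_apply, smul_eq_mul, mul_ite, mul_zero, Finset.mul_sum,
    mul_left_comm c]

lemma omegaDT_const_smul : omegaDT k (c • f) δ wt p = ‖c‖ₑ * omegaDT k f δ wt p := by
  simp only [omegaDT, OmegaMain, OmegaFwd, OmegaBwd, symmDelta_const_smul, mul_left_comm _ c,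
    lpOn_const_mul, mul_add, ENNReal.mul_iSup]

variable {k c f p}

lemma const_smul_mem_mSet (hc : 0 ≤ c) (hf : f ∈ MSet k) : c • f ∈ MSet k := by
  intro x hinj hx
  simp only [Pi.smul_apply, smul_eq_mul, mul_div_assoc, ← Finset.mul_sum]
  exact mul_nonneg hc (hf x hinj hx)

lemma inv_lpOn_smul_mem_bSet {α β : ℝ} (hf : Measurable f)
    (h0 : LpOn (fun x => jacobi α β x * f x) p (-1) 1 ≠ 0)
    (h1 : LpOn (fun x => jacobi α β x * f x) p (-1) 1 ≠ ∞) :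
    (LpOn (fun x => jacobi α β x * f x) p (-1) 1).toReal⁻¹ • f ∈ BSet p α β := by
  refine ⟨hf.const_smul _, ?_⟩
  simp only [Pi.smul_apply, smul_eq_mul, mul_left_comm (jacobi α β _)]
  rw [lpOn_const_mul, Real.enorm_of_nonneg (by positivity),
    ENNReal.ofReal_inv_of_pos (ENNReal.toReal_pos h0 h1), ENNReal.ofReal_toReal h1,
    ENNReal.inv_mul_cancel h0 h1]

lemma ofReal_div_le_iSup_omegaDT {α β δ M N : ℝ} {q : ℝ≥0∞} (hf : Measurable f) (hfk : f ∈ MSet k)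
    (h0 : LpOn (fun x => jacobi α β x * f x) p (-1) 1 ≠ 0) (hN : 0 < N)
    (hfN : LpOn (fun x => jacobi α β x * f x) p (-1) 1 ≤ ENNReal.ofReal N)
    (hM : ENNReal.ofReal M ≤ omegaDT k f δ (jacobi α β) q) :
    ENNReal.ofReal (M / N) ≤ ⨆ g ∈ BSet p α β ∩ MSet k, omegaDT k g δ (jacobi α β) q := by
  set norm := LpOn (fun x => jacobi α β x * f x) p (-1) 1
  have h1 : norm ≠ ∞ := ne_top_of_le_ne_top ENNReal.ofReal_ne_top hfN
  calc ENNReal.ofReal (M / N) = ENNReal.ofReal M / ENNReal.ofReal N :=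
        ENNReal.ofReal_div_of_pos hN
    _ ≤ omegaDT k f δ (jacobi α β) q / norm := ENNReal.div_le_div hM hfN
    _ = omegaDT k (norm.toReal⁻¹ • f) δ (jacobi α β) q := by
        rw [omegaDT_const_smul, Real.enorm_of_nonneg (by positivity),
          ENNReal.ofReal_inv_of_pos (ENNReal.toReal_pos h0 h1), ENNReal.ofReal_toReal h1,
          ENNReal.div_eq_inv_mul]
    _ ≤ _ := le_iSup₂ (f := fun g (_ : g ∈ BSet p α β ∩ MSet k) => omegaDT k g δ (jacobi α β) q) _
        ⟨inv_lpOn_smul_mem_bSet hf h0 h1, const_smul_mem_mSet (by positivity) hfk⟩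

end Homogeneity

section Reflection

/-- The reflection `x ↦ (-1)^k f(-x)`, which preserves `k`-monotonicity and exchanges the two
endpoints. -/
def reflect (k : ℕ) (f : ℝ → ℝ) (x : ℝ) : ℝ := (-1) ^ k * f (-x)

/-- The part of `ω_φ^k(f,δ)_{w,p}` that only involves `[-1,0]`: the main part cut off at `0`
together with the forward part. -/
def leftModulus (k : ℕ) (f : ℝ → ℝ) (δ : ℝ) (wt : ℝ → ℝ) (p : ℝ≥0∞) : ℝ≥0∞ :=
  (⨆ h ∈ Ioc (0 : ℝ) δ,
    LpOn (fun x => wt x * symmDelta k (h * phiW x) f x) p (-1 + 2 * (k : ℝ) ^ 2 * h ^ 2) 0) +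
  OmegaFwd k f δ wt p

variable (k : ℕ) (f wt : ℝ → ℝ) (p : ℝ≥0∞)

lemma phiW_neg (x : ℝ) : phiW (-x) = phiW x := by
  rw [phiW, phiW, neg_sq]

lemma symmDelta_neg (h x : ℝ) : symmDelta k h f (-x) = symmDelta k h (reflect k f) x := by
  have hdomain : (-x - k * h / 2 ∈ Icc (-1 : ℝ) 1 ∧ -x + k * h / 2 ∈ Icc (-1 : ℝ) 1) ↔
      (x - k * h / 2 ∈ Icc (-1 : ℝ) 1 ∧ x + k * h / 2 ∈ Icc (-1 : ℝ) 1) := by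
    simp only [mem_Icc]
    constructor <;> rintro ⟨⟨_, _⟩, _, _⟩ <;> refine ⟨⟨?_, ?_⟩, ?_, ?_⟩ <;> linarith
  simp only [symmDelta, hdomain]
  congr 1
  rw [← Finset.sum_range_reflect]
  refine Finset.sum_congr rfl fun i hi => ?_
  obtain ⟨m, rfl⟩ := Nat.exists_eq_add_of_le (Finset.mem_range_succ_iff.1 hi)
  have hindex : i + m + 1 - 1 - i = m := by omega
  have hpoint : -x - (i + m : ℕ) * h / 2 + m * h = -(x - (i + m : ℕ) * h / 2 + i * h) := by
    push_cast; ring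
  have hsign : (-1 : ℝ) ^ m * (-1) ^ m = 1 := by rw [← mul_pow]; norm_num
  rw [hindex, Nat.add_sub_cancel_left, Nat.add_sub_cancel, Nat.choose_symm_add, hpoint, reflect,
    pow_add]
  linear_combination (-((i + m).choose m * (-1) ^ i * f (-(x - (i + m : ℕ) * h / 2 + i * h)))) *
    hsign

lemma lpOn_mul_reflect (a b : ℝ) :
    LpOn (fun x => wt (-x) * reflect k f x) p (-b) (-a) = LpOn (fun x => wt x * f x) p a b := by
  rw [← lpOn_comp_neg (fun x => wt x * f x)]
  refine lpOn_congr_abs (fun x => ?_) _ _ _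
  simp [reflect, abs_mul]

lemma omegaBwd_eq_omegaFwd_reflect (δ : ℝ) :
    OmegaBwd k f δ wt p = OmegaFwd k (reflect k f) δ (fun x => wt (-x)) p := by
  refine iSup_congr fun h => iSup_congr fun _ => ?_
  rw [← lpOn_comp_neg, neg_sub', sub_neg_eq_add]
  simp only [← symmDelta_neg, neg_add']

variable {p}

lemma omegaDT_le_leftModulus_add_leftModulus_reflect (hp : 1 ≤ p) (hp' : p ≠ ∞) (δ : ℝ) :
    omegaDT k f δ wt p ≤
      leftModulus k f δ wt p + leftModulus k (reflect k f) δ (fun x => wt (-x)) p := by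
  have hmain : OmegaMain k f δ wt p ≤
      (⨆ h ∈ Ioc (0 : ℝ) δ, LpOn (fun x => wt x * symmDelta k (h * phiW x) f x) p
        (-1 + 2 * (k : ℝ) ^ 2 * h ^ 2) 0) +
      ⨆ h ∈ Ioc (0 : ℝ) δ, LpOn (fun x => wt (-x) * symmDelta k (h * phiW x) (reflect k f) x) p
        (-1 + 2 * (k : ℝ) ^ 2 * h ^ 2) 0 := by
    refine iSup₂_le fun h hh => (lpOn_le_lpOn_add_lpOn hp hp' _ _ 0 _).trans ?_
    rw [← lpOn_comp_neg _ _ 0, neg_sub', neg_zero, sub_neg_eq_add]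
    simp only [symmDelta_neg, phiW_neg]
    gcongr
    · exact le_iSup₂ (α := ℝ≥0∞) h hh
    · exact le_iSup₂ (α := ℝ≥0∞) h hh
  rw [omegaDT, leftModulus, leftModulus, omegaBwd_eq_omegaFwd_reflect]
  exact (add_le_add_left (add_le_add_left hmain _) _).trans_eq (by ac_rfl)

end Reflection

section MonotoneDifferences

variable {f : ℝ → ℝ}

lemma mem_mSet_one_iff_monotoneOn : f ∈ MSet 1 ↔ MonotoneOn f (Ioo (-1) 1) := by
  have hslope : ∀ x : Fin 2 → ℝ,
      ∑ i, f (x i) / ∏ j ∈ Finset.univ.erase i, (x i - x j) = slope f (x 0) (x 1) := fun x => by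
    have herase₀ : (Finset.univ : Finset (Fin 2)).erase 0 = {1} := rfl
    have herase₁ : (Finset.univ : Finset (Fin 2)).erase 1 = {0} := rfl
    rw [Fin.sum_univ_two, herase₀, herase₁, Finset.prod_singleton, Finset.prod_singleton,
      slope_def_field, ← neg_sub (x 1) (x 0), div_neg, sub_div]
    ring
  constructor
  · intro hf a ha b hb hab
    rcases hab.eq_or_lt with rfl | hlt
    · exact le_rfl
    · have hnonneg := hf ![a, b] (by simp [Function.Injective, Fin.forall_fin_two, hlt.ne, hlt.ne'])
        (Fin.forall_fin_two.2 ⟨ha, hb⟩)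
      rw [hslope] at hnonneg
      exact (slope_nonneg_iff_of_le hab).1 hnonneg
  · intro hf x _ hx
    exact (hslope x).symm ▸ hf.slope_nonneg (hx 0) (hx 1)

lemma reflect_one_monotoneOn (hf : MonotoneOn f (Ioo (-1) 1)) :
    MonotoneOn (reflect 1 f) (Ioo (-1) 1) := by
  intro a ha b hb hab
  have hle : f (-b) ≤ f (-a) := hf ⟨by linarith [hb.2], by linarith [hb.1]⟩
    ⟨by linarith [ha.2], by linarith [ha.1]⟩ (by linarith)
  simpa [reflect] using hle

lemma symmDelta_one (f : ℝ → ℝ) (u x : ℝ) :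
    symmDelta 1 u f x =
      if x - u / 2 ∈ Icc (-1 : ℝ) 1 ∧ x + u / 2 ∈ Icc (-1 : ℝ) 1 then f (x + u / 2) - f (x - u / 2)
      else 0 := by
  have hpoint : x - u / 2 + u = x + u / 2 := by ring
  simp only [symmDelta, Finset.sum_range_succ, Finset.sum_range_zero, Nat.cast_one, one_mul]
  simp [hpoint, neg_add_eq_sub]

variable {a b x u H M : ℝ}

lemma abs_symmDelta_one_le_sub (hf : MonotoneOn f (Icc (x - H) (x + H))) (hu : 0 ≤ u)
    (huH : u / 2 ≤ H) : |symmDelta 1 u f x| ≤ f (x + H) - f (x - H) := by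
  have hlo : x - H ∈ Icc (x - H) (x + H) := ⟨le_rfl, by linarith⟩
  have hhi : x + H ∈ Icc (x - H) (x + H) := ⟨by linarith, le_rfl⟩
  have hlo' : x - u / 2 ∈ Icc (x - H) (x + H) := ⟨by linarith, by linarith⟩
  have hhi' : x + u / 2 ∈ Icc (x - H) (x + H) := ⟨by linarith, by linarith⟩
  have hleft := hf hlo hlo' (by linarith)
  have hmid := hf hlo' hhi' (by linarith)
  have hright := hf hhi' hhi (by linarith)
  rw [symmDelta_one]
  split_ifs
  · rw [abs_of_nonneg (by linarith)]
    linarith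
  · rw [abs_zero]
    linarith

lemma exists_Icc_forall_abs_le (hf : MonotoneOn f (Icc (x - H) (x + H))) (hH : 0 ≤ H) :
    ∃ a b, b - a = H ∧ x - H ≤ a ∧ b ≤ x + H ∧ ∀ y ∈ Icc a b, |f x| ≤ |f y| := by
  have hx : x ∈ Icc (x - H) (x + H) := ⟨by linarith, by linarith⟩
  rcases le_total 0 (f x) with hfx | hfx
  · refine ⟨x, x + H, by ring, by linarith, le_rfl, fun y hy => ?_⟩
    exact abs_le_abs_of_nonneg hfx (hf hx ⟨by linarith [hy.1], hy.2⟩ hy.1)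
  · refine ⟨x - H, x, by ring, le_rfl, by linarith, fun y hy => ?_⟩
    exact abs_le_abs_of_nonpos hfx (hf ⟨hy.1, by linarith [hy.2]⟩ hx hy.2)

-- The difference telescopes: only the integrals of `f` over `[b-H,b+H]` and `[a-H,a+H]` survive.
lemma setLIntegral_sub_translate_le (hab : a ≤ b) (hH : 0 ≤ H)
    (hf : MonotoneOn f (Icc (a - H) (b + H))) (hM : ∀ x ∈ Icc (a - H) (b + H), |f x| ≤ M) :
    ∫⁻ x in Icc a b, ENNReal.ofReal (f (x + H) - f (x - H)) ≤ ENNReal.ofReal (4 * H * M) := by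
  have hint : ∀ c d, c ∈ Icc (a - H) (b + H) → d ∈ Icc (a - H) (b + H) →
      IntervalIntegrable f volume c d := fun c d hc hd =>
    (hf.mono (uIcc_subset_Icc hc hd)).intervalIntegrable
  have hbound : ∀ c ∈ Icc a b, |∫ x in (c - H)..(c + H), f x| ≤ 2 * H * M := fun c hc => by
    have hnorm := intervalIntegral.norm_integral_le_of_norm_le_const (a := c - H) (b := c + H)
      (f := f) (C := M) fun x hx => by
        rw [uIoc_of_le (by linarith)] at hx
        exact hM x ⟨by linarith [hx.1, hc.1], by linarith [hx.2, hc.2]⟩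
    rw [add_sub_sub_cancel, abs_of_nonneg (by linarith)] at hnorm
    rw [← Real.norm_eq_abs]
    linarith
  have hshift : ∀ t, |t| ≤ H → IntervalIntegrable (fun x => f (x + t)) volume a b := fun t ht => by
    have hab' := abs_le.1 ht
    simpa using (hint (a + t) (b + t) ⟨by linarith, by linarith⟩
      ⟨by linarith, by linarith⟩).comp_add_right t
  have hplus := hshift H (abs_of_nonneg hH).le
  have hminus := hshift (-H) (by rw [abs_neg, abs_of_nonneg hH])
  simp only [← sub_eq_add_neg] at hminus
  rw [← ofReal_integral_eq_lintegral_ofReal]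
  · refine ENNReal.ofReal_le_ofReal ?_
    rw [integral_Icc_eq_integral_Ioc, ← intervalIntegral.integral_of_le hab,
      intervalIntegral.integral_sub hplus hminus, intervalIntegral.integral_comp_add_right,
      intervalIntegral.integral_comp_sub_right,
      intervalIntegral.integral_interval_sub_interval_comm']
    · have ha := (abs_le.1 (hbound a ⟨le_rfl, hab⟩)).1
      have hb := (abs_le.1 (hbound b ⟨hab, le_rfl⟩)).2
      linarith
    all_goals exact hint _ _ ⟨by linarith, by linarith⟩ ⟨by linarith, by linarith⟩
  · exact (intervalIntegrable_iff_integrableOn_Icc_of_le hab).1 (hplus.sub hminus)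
  · filter_upwards [ae_restrict_mem measurableSet_Icc] with x hx
    exact sub_nonneg.2 (hf ⟨by linarith [hx.1], by linarith [hx.2]⟩
      ⟨by linarith [hx.1], by linarith [hx.2]⟩ (by linarith))

lemma abs_mul_symmDelta_one_rpow_le {Q v V : ℝ} (hQ : 1 ≤ Q)
    (hf : MonotoneOn f (Icc (x - H) (x + H))) (hM : ∀ y ∈ Icc (x - H) (x + H), |f y| ≤ M)
    (hu : 0 ≤ u) (huH : u / 2 ≤ H) (hv : |v| ≤ V) :
    |v * symmDelta 1 u f x| ^ Q ≤ V ^ Q * (2 * M) ^ (Q - 1) * (f (x + H) - f (x - H)) := by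
  have hΔ := abs_symmDelta_one_le_sub hf hu huH
  have hΔ0 : 0 ≤ f (x + H) - f (x - H) := (abs_nonneg _).trans hΔ
  have hΔM : f (x + H) - f (x - H) ≤ 2 * M := by
    have hplus := hM (x + H) ⟨by linarith, le_rfl⟩
    have hminus := hM (x - H) ⟨le_rfl, by linarith⟩
    linarith [le_abs_self (f (x + H)), neg_abs_le (f (x - H))]
  have hV : 0 ≤ V := (abs_nonneg v).trans hv
  calc |v * symmDelta 1 u f x| ^ Q
      ≤ (V * (f (x + H) - f (x - H))) ^ Q := by
        rw [abs_mul]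
        gcongr
    _ = V ^ Q * (f (x + H) - f (x - H)) ^ Q := Real.mul_rpow hV hΔ0
    _ ≤ V ^ Q * ((2 * M) ^ (Q - 1) * (f (x + H) - f (x - H))) := by
        gcongr
        exact rpow_le_rpow_sub_one_mul hΔ0 hΔM hQ
    _ = V ^ Q * (2 * M) ^ (Q - 1) * (f (x + H) - f (x - H)) := by ring

lemma setLIntegral_mul_symmDelta_one_rpow_le {w step : ℝ → ℝ} {Q V : ℝ} (hQ : 1 ≤ Q)
    (hab : a ≤ b) (hf : MonotoneOn f (Icc (a - H) (b + H))) (hM0 : 0 < M)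
    (hM : ∀ x ∈ Icc (a - H) (b + H), |f x| ≤ M) (hw : ∀ x ∈ Icc a b, |w x| ≤ V)
    (hstep : ∀ x ∈ Icc a b, 0 ≤ step x ∧ step x / 2 ≤ H) :
    ∫⁻ x in Icc a b, ‖w x * symmDelta 1 (step x) f x‖ₑ ^ Q ≤
      ENNReal.ofReal (V ^ Q * (2 * M) ^ Q * (2 * H)) := by
  have hleft : a ∈ Icc a b := ⟨le_rfl, hab⟩
  have hV : 0 ≤ V := (abs_nonneg _).trans (hw a hleft)
  have hH : 0 ≤ H := by linarith [hstep a hleft]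
  have hpoint : ∀ x ∈ Icc a b, ‖w x * symmDelta 1 (step x) f x‖ₑ ^ Q ≤
      ENNReal.ofReal (V ^ Q * (2 * M) ^ (Q - 1)) * ENNReal.ofReal (f (x + H) - f (x - H)) := by
    intro x hx
    have hsub : Icc (x - H) (x + H) ⊆ Icc (a - H) (b + H) :=
      Icc_subset_Icc (by linarith [hx.1]) (by linarith [hx.2])
    rw [← ENNReal.ofReal_mul (by positivity), Real.enorm_eq_ofReal_abs,
      ENNReal.ofReal_rpow_of_nonneg (abs_nonneg _) (by linarith)]
    exact ENNReal.ofReal_le_ofReal (abs_mul_symmDelta_one_rpow_le hQ (hf.mono hsub)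
      (fun y hy => hM y (hsub hy)) (hstep x hx).1 (hstep x hx).2 (hw x hx))
  calc ∫⁻ x in Icc a b, ‖w x * symmDelta 1 (step x) f x‖ₑ ^ Q
      ≤ ∫⁻ x in Icc a b, ENNReal.ofReal (V ^ Q * (2 * M) ^ (Q - 1)) *
          ENNReal.ofReal (f (x + H) - f (x - H)) := setLIntegral_mono' measurableSet_Icc hpoint
    _ ≤ ENNReal.ofReal (V ^ Q * (2 * M) ^ (Q - 1)) * ENNReal.ofReal (4 * H * M) := by
        rw [lintegral_const_mul' _ _ ENNReal.ofReal_ne_top]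
        gcongr
        exact setLIntegral_sub_translate_le hab hH hf hM
    _ = ENNReal.ofReal (V ^ Q * (2 * M) ^ Q * (2 * H)) := by
        rw [← ENNReal.ofReal_mul (by positivity), ← sub_add_cancel Q 1,
          Real.rpow_add_one (x := 2 * M) (by positivity), add_sub_cancel_right]
        ring_nf

end MonotoneDifferences
section RateExponent

/-- The exponent `min (1/q) (2/q - 2/p)` of the rate in `δ`. Both of its branches are attained:
by a jump in the interior of `[-1,1]` and by a jump at distance `δ²` from an endpoint. -/
def rateExponent (q p : ℝ≥0∞) : ℝ := min (1 / q.toReal) (2 / q.toReal - 2 / p.toReal)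

variable {p q : ℝ≥0∞}

lemma rateExponent_pos (hq : q ≠ 0) (hqp : q < p) : 0 < rateExponent q p := by
  have hlt := one_div_toReal_lt_one_div_toReal hq hqp
  have hq' : 0 < q.toReal := ENNReal.toReal_pos hq (ne_top_of_lt hqp)
  refine lt_min (by positivity) ?_
  rw [div_eq_mul_one_div 2, div_eq_mul_one_div 2 p.toReal]
  linarith

lemma two_div_sub_two_div_lt_one_div (hp : p ≠ 0) (h : p < 2 * q) :
    2 / q.toReal - 2 / p.toReal < 1 / q.toReal := by
  have hlt := one_div_toReal_lt_one_div_toReal hp h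
  rw [ENNReal.toReal_mul, ENNReal.toReal_ofNat, mul_comm, ← div_div] at hlt
  rw [div_eq_mul_one_div 2, div_eq_mul_one_div 2 p.toReal]
  linarith

lemma one_div_lt_two_div_sub_two_div (hq : q ≠ 0) (h : 2 * q < p) :
    1 / q.toReal < 2 / q.toReal - 2 / p.toReal := by
  have hlt := one_div_toReal_lt_one_div_toReal (mul_ne_zero two_ne_zero hq) h
  rw [ENNReal.toReal_mul, ENNReal.toReal_ofNat, mul_comm, ← div_div] at hlt
  rw [div_eq_mul_one_div 2, div_eq_mul_one_div 2 p.toReal]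
  linarith

lemma rateExponent_eq_of_lt (hp : p ≠ 0) (h : p < 2 * q) :
    rateExponent q p = 2 / q.toReal - 2 / p.toReal :=
  min_eq_right (two_div_sub_two_div_lt_one_div hp h).le

lemma rateExponent_eq_of_gt (hq : q ≠ 0) (h : 2 * q < p) : rateExponent q p = 1 / q.toReal :=
  min_eq_left (one_div_lt_two_div_sub_two_div hq h).le

lemma half_sub_one_div_mul_ne_zero (hq : q ≠ 0) (hp : p ≠ 0) (hp2q : p ≠ 2 * q)
    (hq' : q ≠ ∞) : 1 / 2 - 1 / p.toReal * q.toReal ≠ 0 := by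
  intro h
  have hQ : q.toReal ≠ 0 := (ENNReal.toReal_pos hq hq').ne'
  have hP : 1 / p.toReal = 1 / 2 / q.toReal := (eq_div_iff hQ).2 (sub_eq_zero.1 h).symm
  have heq : 2 / q.toReal - 2 / p.toReal = 1 / q.toReal := by
    rw [div_eq_mul_one_div 2 p.toReal, hP]
    ring
  rcases hp2q.lt_or_gt with hlt | hgt
  · exact (two_div_sub_two_div_lt_one_div hp hlt).ne heq
  · exact (one_div_lt_two_div_sub_two_div hq hgt).ne' heq

lemma min_mul_one_div_eq_rateExponent (hq : 0 < q.toReal) :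
    min 1 (1 + 2 * (1 / 2 - 1 / p.toReal * q.toReal)) * (1 / q.toReal) = rateExponent q p := by
  rw [min_mul_of_nonneg _ _ (by positivity), rateExponent, one_mul]
  congr 1
  field_simp
  ring

lemma mul_max_two_mul_sq_rpow_le {h : ℝ} (e : ℝ) (hh : 0 < h) (hh1 : h ≤ 1) :
    h * max ((2 * h ^ 2) ^ e) (1 ^ e) ≤ max (2 ^ e) 1 * h ^ min 1 (1 + 2 * e) := by
  have hpow : h * (2 * h ^ 2) ^ e = 2 ^ e * h ^ (1 + 2 * e) := by
    rw [Real.mul_rpow zero_le_two (by positivity), ← Real.rpow_natCast_mul hh.le,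
      Real.rpow_add hh, Real.rpow_one]
    push_cast
    ring
  have hnear : h ^ (1 + 2 * e) ≤ h ^ min 1 (1 + 2 * e) :=
    Real.rpow_le_rpow_of_exponent_ge hh hh1 (min_le_right _ _)
  have hfar : h ≤ h ^ min 1 (1 + 2 * e) := by
    simpa using Real.rpow_le_rpow_of_exponent_ge hh hh1 (min_le_left 1 (1 + 2 * e))
  rw [Real.one_rpow, mul_max_of_nonneg _ _ hh.le, hpow, mul_one]
  refine max_le ?_ ?_
  · gcongr
    exact le_max_left _ _
  · refine hfar.trans (le_mul_of_one_le_left (by positivity) (le_max_right _ _))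

end RateExponent

section UpperBound

/-- `f` is bounded on `(-1,1/2]` by the power `K (1+x)^{-σ}` of the distance to the left
endpoint. -/
def EndpointBound (K σ : ℝ) (f : ℝ → ℝ) : Prop :=
  ∀ x, -1 < x → x ≤ 1 / 2 → |f x| ≤ K * (1 + x) ^ (-σ)

variable {f : ℝ → ℝ} {p q : ℝ≥0∞} {α β s K σ A B h : ℝ}

lemma exists_endpointBound_of_monotoneOn (hp : p ≠ 0) (α β : ℝ) :
    ∃ K > 0, ∀ f, MonotoneOn f (Ioo (-1) 1) →
      LpOn (fun x => jacobi α β x * f x) p (-1) 1 ≤ 1 → EndpointBound K (α + 1 / p.toReal) f := by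
  set κ : ℝ := 4 ^ (-(|α| + |β|)) * (1 / 8) ^ (1 / p.toReal) with hκ
  have hκ0 : 0 < κ := by positivity
  refine ⟨κ⁻¹, inv_pos.2 hκ0, fun f hf hnorm x hx hx' => ?_⟩
  have hA : 0 < 1 + x := by linarith
  obtain ⟨a, b, hab, ha, hb, hfab⟩ := exists_Icc_forall_abs_le (x := x) (H := (1 + x) / 8)
    (hf.mono fun y hy => ⟨by linarith [hy.1], by linarith [hy.2]⟩) (by linarith)
  have hlower := ofReal_mul_rpow_le_lpOn (g := fun y => jacobi α β y * f y)
    (m := 4 ^ (-(|α| + |β|)) * (1 + x) ^ α * |f x|) hp (by linarith : a < b)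
    (Icc_subset_Icc (by linarith) (by linarith) : Icc a b ⊆ Icc (-1) 1) (by positivity)
    fun y hy => by
      have hw := le_jacobi_of_comparable (α := α) (β := β) (x := y) hA (by linarith [hy.1])
        (by linarith [hy.2]) (by linarith [hy.2])
      rw [abs_mul]
      exact mul_le_mul (hw.trans (le_abs_self _)) (hfab y hy) (abs_nonneg _) (abs_nonneg _)
  have hle := ENNReal.ofReal_le_one.1 (hlower.trans hnorm)
  rw [hab, div_eq_mul_one_div (1 + x), Real.mul_rpow hA.le (by norm_num)] at hle
  rw [inv_mul_eq_div, le_div_iff₀ hκ0, Real.rpow_neg hA.le, ← one_div,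
    le_div_iff₀ (by positivity), Real.rpow_add hA, hκ]
  linarith

lemma EndpointBound.abs_le_of_comparable (hf : EndpointBound K σ f) (hK : 0 ≤ K) (hA : 0 < A)
    {x : ℝ} (hlo : A / 4 ≤ 1 + x) (hhi : 1 + x ≤ 4 * A) (hx : x ≤ 1 / 2) :
    |f x| ≤ K * (4 ^ |σ| * A ^ (-σ)) := by
  have hpow := rpow_le_mul_rpow_of_comparable (-σ) four_pos hA hlo hhi
  rw [abs_neg] at hpow
  exact (hf x (by linarith) hx).trans (by gcongr)

lemma phiW_le_two_mul_sqrt {x : ℝ} (hx : -1 ≤ x) (hxA : 1 + x ≤ 2 * A) : phiW x ≤ 2 * √A := by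
  have hsqrt : 2 * √A = √(2 ^ 2 * A) := by
    rw [Real.sqrt_mul (by norm_num), Real.sqrt_sq zero_le_two]
  rw [phiW, hsqrt]
  refine Real.sqrt_le_sqrt ?_
  nlinarith

-- On a block at distance about `A` from `-1` the step `hφ/2` is at most `h√A`, which is smaller
-- than `A` because `2h² ≤ A`.
lemma EndpointBound.setLIntegral_block_le {Q : ℝ} (hQ : 1 ≤ Q) (hmono : MonotoneOn f (Ioo (-1) 1))
    (hf : EndpointBound K (α + s) f) (hK : 0 < K) (hh : 0 < h) (hh' : h ≤ 1 / 4)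
    (hhA : 2 * h ^ 2 ≤ A) (hAB : A ≤ B) (hBA : B ≤ 2 * A) (hB : B ≤ 1) :
    ∫⁻ x in Icc (-1 + A) (-1 + B), ‖jacobi α β x * symmDelta 1 (h * phiW x) f x‖ₑ ^ Q ≤
      ENNReal.ofReal
        (2 * (4 ^ (|α| + |β|) * (2 * (K * 4 ^ |α + s|))) ^ Q * h * A ^ (1 / 2 - s * Q)) := by
  have hA : 0 < A := (by positivity : 0 < 2 * h ^ 2).trans_le hhA
  have hsq : √A ^ 2 = A := Real.sq_sqrt hA.le
  have hstepA : h * √A ≤ 3 / 4 * A :=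
    abs_le_of_sq_le_sq' (by rw [mul_pow, hsq]; nlinarith) (by positivity) |>.2
  have hstep' : h * √A ≤ 1 / 4 := by
    have hsqrt : √A ≤ 1 := Real.sqrt_le_one.2 (by linarith)
    nlinarith [Real.sqrt_nonneg A]
  refine (setLIntegral_mul_symmDelta_one_rpow_le (H := h * √A)
    (M := K * (4 ^ |α + s| * A ^ (-(α + s)))) (V := 4 ^ (|α| + |β|) * A ^ α) hQ (by linarith)
    (hmono.mono fun x hx => ⟨by linarith [hx.1], by linarith [hx.2]⟩) (by positivity)
    (fun x hx => hf.abs_le_of_comparable hK.le hA (by linarith [hx.1]) (by linarith [hx.2])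
      (by linarith [hx.2])) (fun x hx => ?_) fun x hx => ⟨?_, ?_⟩).trans_eq
    (congrArg ENNReal.ofReal ?_)
  · rw [abs_of_nonneg (jacobi_nonneg ⟨by linarith [hx.1], by linarith [hx.2]⟩)]
    exact jacobi_le_of_comparable hA (by linarith [hx.1]) (by linarith [hx.2]) (by linarith [hx.2])
  · exact mul_nonneg hh.le (Real.sqrt_nonneg _)
  · nlinarith [phiW_le_two_mul_sqrt (x := x) (A := A) (by linarith [hx.1]) (by linarith [hx.2])]
  · have hsplit : 4 ^ (|α| + |β|) * A ^ α * (2 * (K * (4 ^ |α + s| * A ^ (-(α + s))))) =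
        4 ^ (|α| + |β|) * (2 * (K * 4 ^ |α + s|)) * A ^ (-s) := by
      rw [show -s = α + -(α + s) by ring, Real.rpow_add hA]
      ring
    rw [← Real.mul_rpow (by positivity) (by positivity), hsplit,
      Real.mul_rpow (by positivity) (by positivity), ← Real.rpow_mul hA.le, Real.sqrt_eq_rpow,
      show (1 / 2 - s * Q : ℝ) = -s * Q + 1 / 2 by ring, Real.rpow_add hA]
    ring

lemma exists_lpOn_main_le (hq : 1 ≤ q) (hqp : q < p) (hp2q : p ≠ 2 * q) (α β : ℝ) (hK : 0 < K) :
    ∃ C > 0, ∀ f, MonotoneOn f (Ioo (-1) 1) → EndpointBound K (α + 1 / p.toReal) f →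
      ∀ h, 0 < h → h ≤ 1 / 4 →
        LpOn (fun x => jacobi α β x * symmDelta 1 (h * phiW x) f x) q (-1 + 2 * h ^ 2) 0 ≤
          ENNReal.ofReal (C * h ^ rateExponent q p) := by
  have hq0 : q ≠ 0 := (one_pos.trans_le hq).ne'
  have hq' : q ≠ ∞ := ne_top_of_lt hqp
  have hQ : 1 ≤ q.toReal := by simpa using ENNReal.toReal_mono hq' hq
  have he := half_sub_one_div_mul_ne_zero hq0 (pos_of_gt hqp).ne' hp2q hq'
  have hmin := min_mul_one_div_eq_rateExponent (p := p) (one_pos.trans_le hQ)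
  set Q := q.toReal
  set e : ℝ := 1 / 2 - 1 / p.toReal * Q
  have hratio : (2 : ℝ) ^ (-|e|) < 1 :=
    Real.rpow_lt_one_of_one_lt_of_neg one_lt_two (neg_neg_of_pos (abs_pos.2 he))
  have hgeom : 0 < (1 - (2 : ℝ) ^ (-|e|))⁻¹ := inv_pos.2 (by linarith)
  set T : ℝ := 2 * (4 ^ (|α| + |β|) * (2 * (K * 4 ^ |α + 1 / p.toReal|))) ^ Q
  set D : ℝ := T * max (2 ^ e) 1 * (1 - 2 ^ (-|e|))⁻¹ with hD
  have hD0 : 0 < D := mul_pos (by positivity) hgeom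
  refine ⟨D ^ (1 / Q), Real.rpow_pos_of_pos hD0 _, fun f hmono hf h hh hh' => ?_⟩
  have hsum := setLIntegral_Icc_le_of_doubling (c := -1) (hi := 1) (T := T * h) he
    (by positivity : 0 < 2 * h ^ 2) (by nlinarith) (by positivity)
    fun A B hA hAB hB hBA => hf.setLIntegral_block_le (β := β) hQ hmono hK hh hh' hA hAB hBA hB
  rw [neg_add_cancel] at hsum
  refine (lpOn_le_of_setLIntegral_le hq0 hq' (by positivity) hsum).trans
    (ENNReal.ofReal_le_ofReal ?_)
  rw [← hmin, Real.rpow_mul hh.le, ← Real.mul_rpow (by positivity) (by positivity)]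
  refine Real.rpow_le_rpow (by positivity) ?_ (by positivity)
  calc T * h * max ((2 * h ^ 2) ^ e) (1 ^ e) * (1 - 2 ^ (-|e|))⁻¹
      = T * (h * max ((2 * h ^ 2) ^ e) (1 ^ e)) * (1 - 2 ^ (-|e|))⁻¹ := by ring
    _ ≤ T * (max (2 ^ e) 1 * h ^ min 1 (1 + 2 * e)) * (1 - 2 ^ (-|e|))⁻¹ := by
        gcongr T * ?_ * (1 - 2 ^ (-|e|))⁻¹
        exact mul_max_two_mul_sq_rpow_le e hh (by linarith)
    _ = D * h ^ min 1 (1 + 2 * e) := by rw [hD]; ring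

lemma EndpointBound.abs_symmDelta_one_le (hf : EndpointBound K σ f) (hK : 0 ≤ K) (hσ : 0 ≤ σ)
    {x u : ℝ} (hx : -1 < x) (hu : 0 ≤ u) (hxu : x + u ≤ 1 / 2) :
    |symmDelta 1 u f (x + u / 2)| ≤ 2 * K * (1 + x) ^ (-σ) := by
  have hx0 : 0 < 1 + x := by linarith
  have hleft := hf x hx (by linarith)
  have hright : |f (x + u)| ≤ K * (1 + x) ^ (-σ) := by
    refine (hf (x + u) (by linarith) hxu).trans ?_
    gcongr K * ?_
    exact Real.rpow_le_rpow_of_nonpos hx0 (by linarith) (by linarith)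
  rw [symmDelta_one, add_sub_cancel_right, add_assoc, add_halves]
  split_ifs
  · linarith [abs_sub (f (x + u)) (f x)]
  · rw [abs_zero]
    positivity

lemma exists_omegaFwd_le (hq : q ≠ 0) (hqp : q < p) (hα : α ∈ Jset p) (β : ℝ) (hK : 0 < K) :
    ∃ C > 0, ∀ f, EndpointBound K (α + 1 / p.toReal) f → ∀ δ, 0 < δ → δ ≤ 1 / 4 →
      OmegaFwd 1 f δ (jacobi α β) q ≤ ENNReal.ofReal (C * δ ^ rateExponent q p) := by
  have hJ : -(1 / p.toReal) ∈ Jset q := by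
    have hlt := one_div_toReal_lt_one_div_toReal hq hqp
    rw [Jset, if_neg (ne_top_of_lt hqp), mem_Ioi, neg_div]
    linarith
  obtain ⟨C, hC, hnorm⟩ := lpOn_le_of_abs_le_one_add_rpow hq hJ
  set r : ℝ := -(1 / p.toReal) + 1 / q.toReal with hr
  refine ⟨C * (4 ^ |β| * (2 * K)) * 2 ^ r, by positivity, fun f hf δ hδ hδ' => ?_⟩
  refine iSup₂_le fun h hh => ?_
  simp only [Nat.cast_one, one_pow, mul_one, one_mul] at hh ⊢
  have hδsq : 2 * δ ^ 2 ≤ 1 / 8 := by nlinarith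
  refine (hnorm _ (4 ^ |β| * (2 * K)) (2 * δ ^ 2) (by positivity) (by positivity)
    fun x hx => ?_).trans (ENNReal.ofReal_le_ofReal ?_)
  · have hx0 : 0 < 1 + x := by linarith [hx.1]
    have hΔ := hf.abs_symmDelta_one_le hK.le (add_one_div_toReal_nonneg_of_mem_jset hα) hx.1
      hh.1.le (by linarith [hx.2, hh.2])
    rw [abs_mul, abs_of_nonneg (jacobi_nonneg ⟨hx.1.le, by linarith [hx.2]⟩)]
    calc jacobi α β x * |symmDelta 1 h f (x + h / 2)|
        ≤ 4 ^ |β| * (1 + x) ^ α * (2 * K * (1 + x) ^ (-(α + 1 / p.toReal))) := by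
          gcongr
          exact jacobi_le_mul_one_add_rpow hx.1.le (by linarith [hx.2])
      _ = 4 ^ |β| * (2 * K) * (1 + x) ^ (-(1 / p.toReal)) := by
          rw [show -(1 / p.toReal) = α + -(α + 1 / p.toReal) by ring, Real.rpow_add hx0]
          ring
  · have hexp : rateExponent q p ≤ 2 * r := (min_le_right _ _).trans_eq (by rw [hr]; ring)
    rw [Real.mul_rpow zero_le_two (by positivity), ← Real.rpow_natCast_mul hδ.le, ← mul_assoc]
    gcongr C * (4 ^ |β| * (2 * K)) * 2 ^ r * ?_
    exact Real.rpow_le_rpow_of_exponent_ge hδ (by linarith) (mod_cast hexp)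

lemma exists_leftModulus_le (hq : 1 ≤ q) (hqp : q < p) (hp2q : p ≠ 2 * q) (hα : α ∈ Jset p)
    (β : ℝ) :
    ∃ C > 0, ∀ f, MonotoneOn f (Ioo (-1) 1) →
      LpOn (fun x => jacobi α β x * f x) p (-1) 1 ≤ 1 → ∀ δ, 0 < δ → δ ≤ 1 / 4 →
      leftModulus 1 f δ (jacobi α β) q ≤ ENNReal.ofReal (C * δ ^ rateExponent q p) := by
  have hq0 : q ≠ 0 := (one_pos.trans_le hq).ne'
  obtain ⟨K, hK, hend⟩ := exists_endpointBound_of_monotoneOn (pos_of_gt hqp).ne' α β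
  obtain ⟨C₁, hC₁, hmain⟩ := exists_lpOn_main_le hq hqp hp2q α β hK
  obtain ⟨C₂, hC₂, hfwd⟩ := exists_omegaFwd_le hq0 hqp hα β hK
  refine ⟨C₁ + C₂, by positivity, fun f hmono hnorm δ hδ hδ' => ?_⟩
  have hf := hend f hmono hnorm
  rw [leftModulus, add_mul, ENNReal.ofReal_add (by positivity) (by positivity)]
  refine add_le_add (iSup₂_le fun h hh => ?_) (hfwd f hf δ hδ hδ')
  simp only [Nat.cast_one, one_pow, mul_one]
  refine (hmain f hmono hf h hh.1 (hh.2.trans hδ')).trans (ENNReal.ofReal_le_ofReal ?_)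
  gcongr
  · exact hh.1.le
  · exact (rateExponent_pos hq0 hqp).le
  · exact hh.2

lemma exists_iSup_omegaDT_le (hq : 1 ≤ q) (hqp : q < p) (hp2q : p ≠ 2 * q) (hα : α ∈ Jset p)
    (hβ : β ∈ Jset p) :
    ∃ C > 0, ∀ δ, 0 < δ → δ ≤ 1 / 4 →
      ⨆ f ∈ BSet p α β ∩ MSet 1, omegaDT 1 f δ (jacobi α β) q ≤
        ENNReal.ofReal (C * δ ^ rateExponent q p) := by
  obtain ⟨C₁, hC₁, hleft⟩ := exists_leftModulus_le hq hqp hp2q hα β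
  obtain ⟨C₂, hC₂, hright⟩ := exists_leftModulus_le hq hqp hp2q hβ α
  refine ⟨C₁ + C₂, by positivity, fun δ hδ hδ' => iSup₂_le fun f hf => ?_⟩
  obtain ⟨⟨-, hnorm⟩, hmono⟩ := hf
  rw [mem_mSet_one_iff_monotoneOn] at hmono
  have hnorm' := lpOn_mul_reflect 1 f (jacobi α β) p (-1) 1
  rw [hnorm, neg_neg] at hnorm'
  have hadd := omegaDT_le_leftModulus_add_leftModulus_reflect 1 f (jacobi α β) hq
    (ne_top_of_lt hqp) δ
  simp only [jacobi_neg] at hnorm' hadd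
  rw [add_mul, ENNReal.ofReal_add (by positivity) (by positivity)]
  exact hadd.trans (add_le_add (hleft f hmono hnorm.le δ hδ hδ')
    (hright _ (reflect_one_monotoneOn hmono) hnorm'.le δ hδ hδ'))

end UpperBound
section LowerBound

/-- The monotone step function equal to `-1` on `(-∞,-1+u)` and to `0` on `[-1+u,∞)`. -/
def leftStep (u : ℝ) : ℝ → ℝ := indicator (Iio (-1 + u)) fun _ => -1

variable {p q : ℝ≥0∞} {α β b u x δ : ℝ}

lemma leftStep_of_lt (hx : x < -1 + u) : leftStep u x = -1 :=
  indicator_of_mem (s := Iio (-1 + u)) hx _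

lemma leftStep_of_ge (hx : -1 + u ≤ x) : leftStep u x = 0 :=
  indicator_of_notMem (s := Iio (-1 + u)) hx.not_gt _

lemma measurable_leftStep (u : ℝ) : Measurable (leftStep u) :=
  measurable_const.indicator measurableSet_Iio

lemma leftStep_mem_mSet_one (u : ℝ) : leftStep u ∈ MSet 1 := by
  refine mem_mSet_one_iff_monotoneOn.2 fun x _ y _ hxy => ?_
  rcases lt_or_ge x (-1 + u) with hx | hx
  · rw [leftStep_of_lt hx]
    exact le_indicator_apply (fun _ => le_rfl) fun _ => by norm_num
  · rw [leftStep_of_ge hx, leftStep_of_ge (hx.trans hxy)]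

lemma lpOn_indicator_Iio_le (g : ℝ → ℝ) (p : ℝ≥0∞) (a b c : ℝ) :
    LpOn (indicator (Iio c) g) p a b ≤ LpOn g p a c := by
  have hsub : Iio c ∩ Icc a b ⊆ Icc a c := fun x hx => ⟨hx.2.1, le_of_lt hx.1⟩
  rw [LpOn, eLpNorm_indicator_eq_eLpNorm_restrict measurableSet_Iio,
    Measure.restrict_restrict measurableSet_Iio]
  exact eLpNorm_mono_measure _ (Measure.restrict_mono hsub le_rfl)

lemma exists_lpOn_leftStep_le (hp : p ≠ 0) (hα : α ∈ Jset p) (β : ℝ) :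
    ∃ C > 0, ∀ u, 0 < u → u ≤ 1 →
      LpOn (fun x => jacobi α β x * leftStep u x) p (-1) 1 ≤
        ENNReal.ofReal (C * u ^ (α + 1 / p.toReal)) := by
  obtain ⟨C, hC, hnorm⟩ := lpOn_le_of_abs_le_one_add_rpow hp hα
  refine ⟨C * 4 ^ |β|, by positivity, fun u hu hu' => ?_⟩
  have hindicator : (fun x => jacobi α β x * leftStep u x) =
      indicator (Iio (-1 + u)) fun x => jacobi α β x * -1 := by
    ext x
    rw [leftStep, ← indicator_mul_right]
  rw [hindicator]
  refine (lpOn_indicator_Iio_le _ _ _ _ _).trans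
    (hnorm _ _ u (by positivity) hu fun x hx => ?_)
  rw [mul_neg_one, abs_neg, abs_of_nonneg (jacobi_nonneg ⟨hx.1.le, by linarith [hx.2]⟩)]
  exact jacobi_le_mul_one_add_rpow hx.1.le (by linarith [hx.2])

lemma ofReal_le_lpOn_jacobi_mul {g : ℝ → ℝ} (hp : p ≠ 0) (hu : 0 < u) (hu' : u ≤ 1)
    (hb : -1 + u / 2 ≤ b) (hg : ∀ x ∈ Icc (-1 + u / 4) (-1 + u / 2), 1 ≤ |g x|) :
    ENNReal.ofReal
        (4 ^ (-(|α| + |β|)) * (1 / 4) ^ (1 / p.toReal) * u ^ (α + 1 / p.toReal)) ≤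
      LpOn (fun x => jacobi α β x * g x) p (-1) b := by
  refine le_of_eq_of_le (congrArg ENNReal.ofReal ?_) (ofReal_mul_rpow_le_lpOn
    (m := 4 ^ (-(|α| + |β|)) * u ^ α) hp (by linarith : -1 + u / 4 < -1 + u / 2)
    (Icc_subset_Icc (by linarith) hb) (by positivity) fun x hx => ?_)
  · rw [show -1 + u / 2 - (-1 + u / 4) = 1 / 4 * u by ring,
      Real.mul_rpow (by norm_num) hu.le, Real.rpow_add hu]
    ring
  · have hw := le_jacobi_of_comparable (α := α) (β := β) (x := x) hu (by linarith [hx.1])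
      (by linarith [hx.2]) (by linarith [hx.2])
    rw [abs_mul]
    exact (hw.trans (le_abs_self _)).trans (le_mul_of_one_le_right (abs_nonneg _) (hg x hx))

lemma lpOn_leftStep_ne_zero (hp : p ≠ 0) (hu : 0 < u) (hu' : u ≤ 1) :
    LpOn (fun x => jacobi α β x * leftStep u x) p (-1) 1 ≠ 0 := by
  refine (lt_of_lt_of_le (ENNReal.ofReal_pos.2 (by positivity))
    (ofReal_le_lpOn_jacobi_mul hp hu hu' (by linarith) fun x hx => ?_)).ne'
  rw [leftStep_of_lt (by linarith [hx.2]), abs_neg, abs_one]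

lemma ofReal_le_omegaFwd_leftStep (hq : q ≠ 0) (hδ : 0 < δ) (hδ' : δ ≤ 1 / 4) :
    ENNReal.ofReal
        (4 ^ (-(|α| + |β|)) * (1 / 4) ^ (1 / q.toReal) * (δ ^ 2) ^ (α + 1 / q.toReal)) ≤
      OmegaFwd 1 (leftStep (δ ^ 2)) δ (jacobi α β) q := by
  have hδsq : δ ^ 2 ≤ 1 / 16 := by nlinarith
  have hδsq0 : 0 < δ ^ 2 := by positivity
  rw [OmegaFwd]
  simp only [Nat.cast_one, one_pow, mul_one, one_mul]
  refine le_iSup₂_of_le (2 * δ ^ 2) ⟨by positivity, le_rfl⟩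
    (ofReal_le_lpOn_jacobi_mul hq hδsq0 (by linarith) (by linarith) fun x hx => ?_)
  obtain ⟨hx₁, hx₂⟩ := hx
  rw [symmDelta_one, if_pos ⟨⟨by linarith, by linarith⟩, by linarith, by linarith⟩,
    leftStep_of_ge (by linarith), leftStep_of_lt (by linarith)]
  norm_num

lemma symmDelta_one_leftStep_one (hδ : 0 < δ) (hδ' : δ ≤ 1 / 4) (hx : x ∈ Icc 0 (δ / 4)) :
    symmDelta 1 (δ * phiW x) (leftStep 1) x = 1 := by
  obtain ⟨hx₀, hx₁⟩ := hx
  have hφ : 1 / 2 < phiW x := Real.lt_sqrt_of_sq_lt (by nlinarith)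
  have hφ' : phiW x ≤ 1 := Real.sqrt_le_one.2 (by nlinarith)
  have hstep : δ / 2 < δ * phiW x := by nlinarith
  have hstep' : δ * phiW x ≤ δ := mul_le_of_le_one_right hδ.le hφ'
  rw [symmDelta_one, if_pos ⟨⟨by linarith, by linarith⟩, by linarith, by linarith⟩,
    leftStep_of_ge (by linarith), leftStep_of_lt (by linarith)]
  norm_num

lemma ofReal_le_omegaMain_leftStep_one (hq : q ≠ 0) (hδ : 0 < δ) (hδ' : δ ≤ 1 / 4) :
    ENNReal.ofReal (4 ^ (-(|α| + |β|)) * (1 / 4) ^ (1 / q.toReal) * δ ^ (1 / q.toReal)) ≤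
      OmegaMain 1 (leftStep 1) δ (jacobi α β) q := by
  rw [OmegaMain, mul_assoc, ← Real.mul_rpow (by norm_num) hδ.le, one_div_mul_eq_div]
  simp only [Nat.cast_one, one_pow, mul_one]
  refine le_iSup₂_of_le δ ⟨hδ, le_rfl⟩ (le_of_eq_of_le (by rw [sub_zero])
    (ofReal_mul_rpow_le_lpOn hq (by positivity : 0 < δ / 4)
      (Icc_subset_Icc (by nlinarith) (by nlinarith)) (by positivity) fun x hx => ?_))
  have hw := le_jacobi_of_comparable (α := α) (β := β) (x := x) one_pos (by linarith [hx.1])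
    (by linarith [hx.2]) (by linarith [hx.2])
  rw [symmDelta_one_leftStep_one hδ hδ' hx, mul_one]
  rw [Real.one_rpow, mul_one] at hw
  exact hw.trans (le_abs_self _)

lemma exists_mul_rpow_one_div_le_iSup_omegaDT (hq : q ≠ 0) (hp : p ≠ 0)
    (hα : α ∈ Jset p) (β : ℝ) :
    ∃ c > 0, ∀ δ, 0 < δ → δ ≤ 1 / 4 →
      ENNReal.ofReal (c * δ ^ (1 / q.toReal)) ≤
        ⨆ f ∈ BSet p α β ∩ MSet 1, omegaDT 1 f δ (jacobi α β) q := by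
  obtain ⟨C, hC, hnorm⟩ := exists_lpOn_leftStep_le hp hα β
  have hnorm_one := hnorm 1 one_pos le_rfl
  rw [Real.one_rpow, mul_one] at hnorm_one
  refine ⟨4 ^ (-(|α| + |β|)) * (1 / 4) ^ (1 / q.toReal) / C, by positivity, fun δ hδ hδ' => ?_⟩
  rw [div_mul_eq_mul_div]
  exact ofReal_div_le_iSup_omegaDT (measurable_leftStep 1) (leftStep_mem_mSet_one 1)
    (lpOn_leftStep_ne_zero hp one_pos le_rfl) hC hnorm_one
    ((ofReal_le_omegaMain_leftStep_one hq hδ hδ').trans (le_self_add.trans le_self_add))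

lemma exists_mul_rpow_sub_le_iSup_omegaDT (hq : q ≠ 0) (hp : p ≠ 0)
    (hα : α ∈ Jset p) (β : ℝ) :
    ∃ c > 0, ∀ δ, 0 < δ → δ ≤ 1 / 4 →
      ENNReal.ofReal (c * δ ^ (2 / q.toReal - 2 / p.toReal)) ≤
        ⨆ f ∈ BSet p α β ∩ MSet 1, omegaDT 1 f δ (jacobi α β) q := by
  obtain ⟨C, hC, hnorm⟩ := exists_lpOn_leftStep_le hp hα β
  set c : ℝ := 4 ^ (-(|α| + |β|)) * (1 / 4) ^ (1 / q.toReal)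
  refine ⟨c / C, by positivity, fun δ hδ hδ' => ?_⟩
  have hδsq : δ ^ 2 ≤ 1 := by nlinarith
  have hquot : c / C * δ ^ (2 / q.toReal - 2 / p.toReal) =
      c * (δ ^ 2) ^ (α + 1 / q.toReal) / (C * (δ ^ 2) ^ (α + 1 / p.toReal)) := by
    have hexp : 2 / q.toReal - 2 / p.toReal =
        (2 : ℕ) * (α + 1 / q.toReal - (α + 1 / p.toReal)) := by
      push_cast
      ring
    rw [mul_div_mul_comm, ← Real.rpow_sub (by positivity), hexp, Real.rpow_natCast_mul hδ.le]
  rw [hquot]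
  exact ofReal_div_le_iSup_omegaDT (measurable_leftStep _) (leftStep_mem_mSet_one _)
    (lpOn_leftStep_ne_zero hp (by positivity) hδsq) (by positivity)
    (hnorm _ (by positivity) hδsq)
    ((ofReal_le_omegaFwd_leftStep hq hδ hδ').trans (le_add_self.trans le_self_add))

lemma exists_mul_rpow_rateExponent_le_iSup_omegaDT (hq : q ≠ 0) (hp : p ≠ 0)
    (hα : α ∈ Jset p) (β : ℝ) :
    ∃ c > 0, ∀ δ, 0 < δ → δ ≤ 1 / 4 →
      ENNReal.ofReal (c * δ ^ rateExponent q p) ≤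
        ⨆ f ∈ BSet p α β ∩ MSet 1, omegaDT 1 f δ (jacobi α β) q := by
  rcases min_choice (1 / q.toReal) (2 / q.toReal - 2 / p.toReal) with hmin | hmin
  · rw [rateExponent, hmin]
    exact exists_mul_rpow_one_div_le_iSup_omegaDT hq hp hα β
  · rw [rateExponent, hmin]
    exact exists_mul_rpow_sub_le_iSup_omegaDT hq hp hα β

end LowerBound

theorem statement3 (q p : ℝ≥0∞) (hq : 1 ≤ q) (hqp : q < p) (hp2q : p ≠ 2 * q)
    (α β : ℝ) (hα : α ∈ Jset p) (hβ : β ∈ Jset p) :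
    ∃ c₁ > (0 : ℝ), ∃ c₂ > (0 : ℝ), ∀ δ : ℝ, 0 < δ → δ < 1 / 4 →
      (p < 2 * q →
        ENNReal.ofReal (c₁ * δ ^ (2 / q.toReal - 2 / p.toReal)) ≤
          (⨆ f ∈ BSet p α β ∩ MSet 1, omegaDT 1 f δ (jacobi α β) q) ∧
        (⨆ f ∈ BSet p α β ∩ MSet 1, omegaDT 1 f δ (jacobi α β) q) ≤
          ENNReal.ofReal (c₂ * δ ^ (2 / q.toReal - 2 / p.toReal))) ∧
      (2 * q < p →
        ENNReal.ofReal (c₁ * δ ^ (1 / q.toReal)) ≤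
          (⨆ f ∈ BSet p α β ∩ MSet 1, omegaDT 1 f δ (jacobi α β) q) ∧
        (⨆ f ∈ BSet p α β ∩ MSet 1, omegaDT 1 f δ (jacobi α β) q) ≤
          ENNReal.ofReal (c₂ * δ ^ (1 / q.toReal))) := by
  have hq0 : q ≠ 0 := (one_pos.trans_le hq).ne'
  have hp0 : p ≠ 0 := (pos_of_gt hqp).ne'
  obtain ⟨c₁, hc₁, hlower⟩ := exists_mul_rpow_rateExponent_le_iSup_omegaDT hq0 hp0 hα β
  obtain ⟨c₂, hc₂, hupper⟩ := exists_iSup_omegaDT_le hq hqp hp2q hα hβ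
  refine ⟨c₁, hc₁, c₂, hc₂, fun δ hδ hδ' => ⟨fun hlt => ?_, fun hgt => ?_⟩⟩
  · rw [← rateExponent_eq_of_lt hp0 hlt]
    exact ⟨hlower δ hδ hδ'.le, hupper δ hδ hδ'.le⟩
  · rw [← rateExponent_eq_of_gt hq0 hgt]
    exact ⟨hlower δ hδ hδ'.le, hupper δ hδ hδ'.le⟩
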